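/- The maps ηₙ : (S²)ₙ → (GΓℤ(2))_{n−1} defined by η₁(*) = e, η₂(y) = τ(1) (where 1 denotes the generator of Γ₂ℤ(2) ≅ ℤ), and, for n ≥ 3 and a degenerate simplex written in canonical form s_{j_{n−2}}⋯s_{j₁}y with j_{n−2} > ⋯ > j₁, ηₙ(s_{j_{n−2}}⋯s_{j₁}y) = e if j₁ = 0 and ηₙ(s_{j_{n−2}}⋯s_{j₁}y) = τ(s_{j_{n−2}}⋯s_{j₁}1) otherwise, constitute a well-defined twisting function η : S² → GΓℤ(2). -/

import Mathlib

open CategoryTheory Simplicial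

namespace HopfModel

/-- A map of simplicial sets is a *Kan fibration* if it has the right lifting property
with respect to all horn inclusions `Λ[n, k] ⟶ Δ[n]` for `n ≥ 1`, `0 ≤ k ≤ n`. -/
def IsKanFibration {X Y : SSet} (p : X ⟶ Y) : Prop :=
  ∀ (n : ℕ) (i : Fin (n + 2)), HasLiftingProperty (SSet.horn (n + 1) i).ι p

/-- The underlying simplicial set of a simplicial group. -/
def uSSet (H : SimplicialObject GrpCat) : SSet := H ⋙ forget GrpCat

/-- The `i`-th face map of a simplicial group, as a group homomorphism. -/
def δHom (H : SimplicialObject GrpCat) {n : ℕ} (i : Fin (n + 2)) :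
    (H _⦋n + 1⦌ : Type) →* (H _⦋n⦌ : Type) := (H.δ i).hom

/-- The `i`-th degeneracy map of a simplicial group, as a group homomorphism. -/
def σHom (H : SimplicialObject GrpCat) {n : ℕ} (i : Fin (n + 1)) :
    (H _⦋n⦌ : Type) →* (H _⦋n + 1⦌ : Type) := (H.σ i).hom

/-- A twisting function `ζ : B → H`, i.e. a family of maps `ζₙ : Bₙ → H_{n-1}` (`n ≥ 1`)
satisfying `∂₀ζ(b) = (ζ(∂₀b))⁻¹·ζ(∂₁b)`, `∂ᵢζ(b) = ζ(∂_{i+1}b)` for `i > 0`,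
`sᵢζ(b) = ζ(s_{i+1}b)` for `i ≥ 0`, and `ζ(s₀b) = e`. -/
structure TwistingFunction (B : SSet) (H : SimplicialObject GrpCat) where
  map : ∀ n : ℕ, B _⦋n + 1⦌ → H _⦋n⦌
  map_δ₀ : ∀ (n : ℕ) (b : B _⦋n + 2⦌),
    H.δ 0 (map (n + 1) b) = (map n (B.δ 0 b))⁻¹ * map n (B.δ 1 b)
  map_δ : ∀ (n : ℕ) (j : Fin (n + 1)) (b : B _⦋n + 2⦌),
    H.δ j.succ (map (n + 1) b) = map n (B.δ j.succ.succ b)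
  map_σ : ∀ (n : ℕ) (i : Fin (n + 1)) (b : B _⦋n + 1⦌),
    H.σ i (map n b) = map (n + 1) (B.σ i.succ b)
  map_σ₀ : ∀ (n : ℕ) (b : B _⦋n⦌), map n (B.σ 0 b) = 1

/-- A left action of a simplicial group `H` on a simplicial set `F`:
a degreewise group action commuting with faces and degeneracies. -/
structure SimplicialAction (H : SimplicialObject GrpCat) (F : SSet) where
  act : ∀ n : ℕ, H _⦋n⦌ → F _⦋n⦌ → F _⦋n⦌
  one_act : ∀ (n : ℕ) (f : F _⦋n⦌), act n 1 f = f
  mul_act : ∀ (n : ℕ) (g h : H _⦋n⦌) (f : F _⦋n⦌),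
    act n (g * h) f = act n g (act n h f)
  δ_act : ∀ (n : ℕ) (i : Fin (n + 2)) (g : H _⦋n + 1⦌) (f : F _⦋n + 1⦌),
    F.δ i (act (n + 1) g f) = act n (H.δ i g) (F.δ i f)
  σ_act : ∀ (n : ℕ) (i : Fin (n + 1)) (g : H _⦋n⦌) (f : F _⦋n⦌),
    F.σ i (act n g f) = act (n + 1) (H.σ i g) (F.σ i f)

/-- A simplicial group acting on (the underlying simplicial set of) itself
by left multiplication. -/
def leftMulAction (H : SimplicialObject GrpCat) : SimplicialAction H (uSSet H) where
  act n g h := g * (show (H _⦋n⦌ : Type) from h)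
  one_act n f := one_mul (show (H _⦋n⦌ : Type) from f)
  mul_act n g h f := mul_assoc g h (show (H _⦋n⦌ : Type) from f)
  δ_act n i g f := map_mul (δHom H i) g (show (H _⦋n + 1⦌ : Type) from f)
  σ_act n i g f := map_mul (σHom H i) g (show (H _⦋n⦌ : Type) from f)

/-- The data exhibiting a simplicial set `P`, together with a map `p : P ⟶ B`, as
the twisted cartesian product `F ×_ζ B` with its projection onto `B`:
`Pₙ ≅ Fₙ × Bₙ`, `∂₀(f,b) = (ζ(b)·∂₀f, ∂₀b)`, `∂ᵢ(f,b) = (∂ᵢf, ∂ᵢb)` for `i > 0`,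
`sᵢ(f,b) = (sᵢf, sᵢb)`, and `p(f,b) = b`. -/
structure TCP (H : SimplicialObject GrpCat) (F B : SSet) (A : SimplicialAction H F)
    (ζ : TwistingFunction B H) (P : SSet) (p : P ⟶ B) where
  e : ∀ n : ℕ, P _⦋n⦌ ≃ F _⦋n⦌ × B _⦋n⦌
  e_δ₀ : ∀ (n : ℕ) (x : P _⦋n + 1⦌),
    e n (P.δ 0 x) =
      (A.act n (ζ.map n (e (n + 1) x).2) (F.δ 0 (e (n + 1) x).1), B.δ 0 (e (n + 1) x).2)
  e_δ : ∀ (n : ℕ) (j : Fin (n + 1)) (x : P _⦋n + 1⦌),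
    e n (P.δ j.succ x) = (F.δ j.succ (e (n + 1) x).1, B.δ j.succ (e (n + 1) x).2)
  e_σ : ∀ (n : ℕ) (i : Fin (n + 1)) (x : P _⦋n⦌),
    e (n + 1) (P.σ i x) = (F.σ i (e n x).1, B.σ i (e n x).2)
  proj : ∀ (n : ℕ) (x : P _⦋n⦌),
    p.app (Opposite.op (SimplexCategory.mk n)) x = (e n x).2

end HopfModel

namespace HopfModel

/-- The chain complex `ℤ(2)` of abelian groups: one copy of `ℤ` in degree `2`
and `0` elsewhere. -/
noncomputable def Z2 : ChainComplex AddCommGrpCat ℕ :=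
  (HomologicalComplex.single AddCommGrpCat (ComplexShape.down ℕ) 2).obj (AddCommGrpCat.of ℤ)

/-- The simplicial abelian group `Γℤ(2)` corresponding to the chain complex `ℤ(2)`
under the Dold–Kan correspondence. -/
noncomputable def GammaZ2 : SimplicialObject AddCommGrpCat :=
  AlgebraicTopology.DoldKan.Γ₀.obj Z2

/-- The underlying simplicial set of `Γℤ(2)`. -/
noncomputable def GammaZ2SSet : SSet := GammaZ2 ⋙ forget AddCommGrpCat

/-- The relations `s₀x = e` (`x ∈ Kₙ`) defining the loop group `G(K)ₙ`. -/
def loopRels (K : SSet) (n : ℕ) : Set (FreeGroup (K _⦋n + 1⦌)) :=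
  Set.range fun x : K _⦋n⦌ => FreeGroup.of (K.σ 0 x)

end HopfModel

namespace HopfModel

/-- `S2` is the minimal simplicial model of the 2-sphere, with nondegenerate
`2`-simplex `y`: there is exactly one `0`-simplex and one `1`-simplex, every `2`-simplex
other than `y` is degenerate, `y` itself is nondegenerate, and every simplex in
dimension `≥ 3` is degenerate. -/
structure IsMinimalS2 (S2 : SSet) (y : S2 _⦋2⦌) : Prop where
  nonempty₀ : Nonempty (S2 _⦋0⦌)
  subsingleton₀ : Subsingleton (S2 _⦋0⦌)
  subsingleton₁ : Subsingleton (S2 _⦋1⦌)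
  two_simplices : ∀ z : S2 _⦋2⦌, z = y ∨ ∃ w : S2 _⦋1⦌, z = S2.σ 0 w
  nondegen₀ : ∀ w : S2 _⦋1⦌, y ≠ S2.σ 0 w
  nondegen₁ : ∀ w : S2 _⦋1⦌, y ≠ S2.σ 1 w
  degen_above : ∀ (n : ℕ) (z : S2 _⦋n + 3⦌),
    ∃ (i : Fin (n + 3)) (w : S2 _⦋n + 2⦌), z = S2.σ i w

end HopfModel


open HopfModel in
theorem gamma_zero (x x' : GammaZ2SSet _⦋1⦌) : x = x' := by
  have h : 𝟙 (GammaZ2.obj (Opposite.op ⦋1⦌)) = 0 := by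
    apply (AlgebraicTopology.DoldKan.Γ₀.splitting Z2).hom_ext'
    intro A
    apply Limits.IsZero.eq_of_src
    refine HomologicalComplex.isZero_single_obj_X (ComplexShape.down ℕ) 2 _ _ ?_
    have : A.1.unop.len ≤ 1 := SimplexCategory.len_le_of_epi A.e
    omega
  have key : ∀ z : GammaZ2.obj (Opposite.op ⦋1⦌), z = 0 := fun z => by
    have := congrArg (fun f => f.hom z) h
    simpa using this
  exact (key x).trans (key x').symm

/-- pulling back the generator along a non-epi gives the same thing -/
theorem S2_aux_nonepi (X : SSet) (hX : ∀ a b : X _⦋1⦌, a = b) (g : X _⦋2⦌) {n : ℕ}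
    (θ θ' : ⦋n⦌ ⟶ ⦋2⦌) (h : ¬ Epi θ) (h' : ¬ Epi θ') :
    X.map θ.op g = X.map θ'.op g := by
  rw [SimplexCategory.epi_iff_surjective] at h h'
  obtain ⟨i, a, rfl⟩ := SimplexCategory.eq_comp_δ_of_not_surjective θ h
  obtain ⟨j, b, rfl⟩ := SimplexCategory.eq_comp_δ_of_not_surjective θ' h'
  have h0 : ∀ a b : X _⦋0⦌, a = b := fun u v => by
    have := congrArg (X.δ 0) (hX (X.σ 0 u) (X.σ 0 v))
    have e : ∀ w : X _⦋0⦌, X.δ 0 (X.σ 0 w) = w := fun w => by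
      have := congrArg (fun f => f w) (X.δ_comp_σ_self (i := (0 : Fin 1)))
      simpa using this
    rwa [e, e] at this
  have key : ∀ (c : ⦋n⦌ ⟶ ⦋1⦌) (z : X _⦋1⦌), X.map c.op z =
      X.map ((SimplexCategory.const ⦋n⦌ ⦋0⦌ 0)).op (X.map (SimplexCategory.δ (0 : Fin 2)).op z) := by
    intro c z
    rw [hX z (X.map (SimplexCategory.σ (0 : Fin 1)).op (X.map (SimplexCategory.δ (0 : Fin 2)).op z))]
    rw [← ConcreteCategory.comp_apply (X.map _) (X.map c.op), ← X.map_comp, ← op_comp]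
    have : c ≫ SimplexCategory.σ (0 : Fin 1) = SimplexCategory.const ⦋n⦌ ⦋0⦌ 0 :=
      Subsingleton.elim _ _
    rw [this]
    exact congrArg _ (h0 _ _)
  rw [op_comp, op_comp, X.map_comp, X.map_comp, ConcreteCategory.comp_apply,
    ConcreteCategory.comp_apply, key a, key b]
  exact congrArg _ (h0 _ _)

open HopfModel in
theorem S2_nondeg (S2 : SSet) (y : S2 _⦋2⦌) (hS2 : IsMinimalS2 S2 y) :
    y ∈ S2.nonDegenerate 2 := by
  rw [SSet.mem_nonDegenerate_iff_notMem_degenerate, SSet.degenerate_eq_iUnion_range_σ]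
  simp only [Set.mem_iUnion, Set.mem_range, not_exists]
  intro i w h
  fin_cases i
  · exact hS2.nondegen₀ w h.symm
  · exact hS2.nondegen₁ w h.symm

open HopfModel in
theorem S2_wd (S2 : SSet) (y : S2 _⦋2⦌) (hS2 : IsMinimalS2 S2 y) 
    (X : SSet) (hX : ∀ a b : X _⦋1⦌, a = b) (g : X _⦋2⦌) {n : ℕ}
    (θ θ' : ⦋n⦌ ⟶ ⦋2⦌) (h : S2.map θ.op y = S2.map θ'.op y) :
    X.map θ.op g = X.map θ'.op g := by
  by_cases h1 : Epi θ
  · rw [S2.unique_nonDegenerate_map _ θ ⟨y, S2_nondeg S2 y hS2⟩ rfl θ' ⟨y, S2_nondeg S2 y hS2⟩ h]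
  by_cases h2 : Epi θ'
  · rw [S2.unique_nonDegenerate_map _ θ' ⟨y, S2_nondeg S2 y hS2⟩ rfl θ ⟨y, S2_nondeg S2 y hS2⟩ h.symm]
  exact S2_aux_nonepi X hX g θ θ' h1 h2

open HopfModel in
theorem S2_surj (S2 : SSet) (y : S2 _⦋2⦌) (hS2 : IsMinimalS2 S2 y) :
    ∀ (n : ℕ) (z : S2 _⦋n⦌), ∃ θ : ⦋n⦌ ⟶ ⦋2⦌, S2.map θ.op y = z := fun n z => match n, z with
  | 0, z => ⟨SimplexCategory.const _ _ 0, hS2.subsingleton₀.elim _ _⟩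
  | 1, z => ⟨SimplexCategory.const _ _ 0, hS2.subsingleton₁.elim _ _⟩
  | 2, z => by
    rcases hS2.two_simplices z with rfl | ⟨w, rfl⟩
    · exact ⟨𝟙 _, by simp⟩
    · obtain ⟨θ, rfl⟩ := S2_surj S2 y hS2 1 w
      refine ⟨SimplexCategory.σ 0 ≫ θ, ?_⟩
      rw [op_comp, S2.map_comp]; rfl
  | n + 3, z => by
    obtain ⟨i, w, rfl⟩ := hS2.degen_above n z
    obtain ⟨θ, rfl⟩ := S2_surj S2 y hS2 (n + 2) w
    refine ⟨SimplexCategory.σ i ≫ θ, ?_⟩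
    rw [op_comp, S2.map_comp]; rfl

open HopfModel in
theorem S2_map (S2 : SSet) (y : S2 _⦋2⦌) (hS2 : IsMinimalS2 S2 y)
    (X : SSet) (hX : ∀ a b : X _⦋1⦌, a = b) (g : X _⦋2⦌) :
    ∃ f : ∀ n : ℕ, S2 _⦋n⦌ → X _⦋n⦌, f 2 y = g ∧
      ∀ (n m : ℕ) (α : ⦋m⦌ ⟶ ⦋n⦌) (z : S2 _⦋n⦌), f m (S2.map α.op z) = X.map α.op (f n z) := by
  choose t ht using S2_surj S2 y hS2
  have hf : ∀ (n : ℕ) (z : S2 _⦋n⦌) (θ : ⦋n⦌ ⟶ ⦋2⦌), S2.map θ.op y = z →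
      X.map (t n z).op g = X.map θ.op g := fun n z θ h =>
    S2_wd S2 y hS2 X hX g _ _ ((ht n z).trans h.symm)
  refine ⟨fun n z => X.map (t n z).op g, ?_, ?_⟩
  · exact (hf 2 y (𝟙 _) (by simp)).trans (by simp)
  · intro n m α z
    refine (hf m _ (α ≫ t n z) ?_).trans ?_
    · rw [op_comp, S2.map_comp, ConcreteCategory.comp_apply, ht]
    · rw [op_comp, X.map_comp, ConcreteCategory.comp_apply]

open HopfModel in
/-- Let `S²` be the minimal simplicial model of the 2-sphere with
nondegenerate `2`-simplex `y`, and let `GK = GΓℤ(2)` be the loop group of `Γℤ(2)` with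
canonical twisting function `ζ = τ`. The formulas `η₂(y) = τ(1)` (for `1` a generator of
`Γ₂ℤ(2) ≅ ℤ`), `η(s₀b) = e` and `ηₙ(s_{j_{n-2}}⋯s_{j₁}y) = τ(s_{j_{n-2}}⋯s_{j₁}1)`
determine a well-defined twisting function `η : S² → GΓℤ(2)`; i.e. there exists a
twisting function `η` with `η₂(y) = τ(1)` (and it is unique, as the remaining values are
forced by the twisting identities). -/
theorem eta_twistingFunction_exists
    (S2 : SSet) (y : S2 _⦋2⦌) (hS2 : IsMinimalS2 S2 y)
    (GK : SimplicialObject GrpCat) (ζ : TwistingFunction GammaZ2SSet GK)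
    (ψ : ∀ n : ℕ, PresentedGroup (loopRels GammaZ2SSet n) ≃* (GK _⦋n⦌ : Type))
    (hψ : ∀ (n : ℕ) (x : GammaZ2SSet _⦋n + 1⦌),
      ψ n (PresentedGroup.of x) = ζ.map n x)
    (g : GammaZ2SSet _⦋2⦌)
    (hg : ∃ e : (GammaZ2 _⦋2⦌ : Type) ≃+ ℤ, e g = 1) :
    ∃ η : TwistingFunction S2 GK, η.map 1 y = ζ.map 1 g := by
  obtain ⟨f, hf, hn⟩ := S2_map S2 y hS2 GammaZ2SSet gamma_zero g
  have hδ : ∀ (n : ℕ) (i : Fin (n + 2)) (z : S2 _⦋n + 1⦌),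
      f n (S2.δ i z) = GammaZ2SSet.δ i (f (n + 1) z) := fun n i z => hn _ _ (SimplexCategory.δ i) z
  have hσ : ∀ (n : ℕ) (i : Fin (n + 1)) (z : S2 _⦋n⦌),
      f (n + 1) (S2.σ i z) = GammaZ2SSet.σ i (f n z) := fun n i z => hn _ _ (SimplexCategory.σ i) z
  refine ⟨{ map := fun n b => ζ.map n (f (n + 1) b), map_δ₀ := ?_, map_δ := ?_, map_σ := ?_,
            map_σ₀ := ?_ }, ?_⟩
  · intro n b
    rw [hδ, hδ]; exact ζ.map_δ₀ n _
  · intro n j b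
    rw [hδ]; exact ζ.map_δ n j _
  · intro n i b
    rw [hσ]; exact ζ.map_σ n i _
  · intro n b
    rw [hσ]; exact ζ.map_σ₀ n _
  · exact congrArg (ζ.map 1) hf
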